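/- arXiv:1302.6640 — 2 statements merged into one kernel-verified Lean document; each statement's English description precedes it below -/
import Mathlib

section
/- Let A be a Gorenstein commutative Noetherian local ring of Krull dimension d and let N be a nonzero finitely generated A-module. Then Ext^v_A(N, A) = 0 for every natural number v with v < d − dim N. -/
/-!
STATEMENT 10: Let A be a Gorenstein commutative Noetherian local ring of Krull dimension d
and let N be a nonzero finitely generated A-module. Then Ext^v_A(N, A) = 0 for every
natural number v with v < d − dim N  (equivalently, v + dim N < d), where
dim N = Krull dimension of A / Ann_A(N).
-/

open CategoryTheory Opposite

noncomputable section

universe u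

/-- The `t`-th Ext group `Ext_A^t(N, A)`, as an `A`-module. -/
abbrev extPow (A : Type u) [CommRing A] (N : Type u) [AddCommGroup N] [Module A N]
    (t : ℕ) : ModuleCat.{u} A :=
  ((_root_.Ext.{u} A (ModuleCat.{u} A) t).obj (op (ModuleCat.of A N))).obj (ModuleCat.of A A)

/-- `A` has finite injective dimension as a module over itself. -/
def HasFiniteSelfInjDim (A : Type u) [CommRing A] : Prop :=
  ∃ n : ℕ, ∀ (M : ModuleCat.{u} A) (i : ℕ), n < i →
    Subsingleton (((_root_.Ext.{u} A (ModuleCat.{u} A) i).obj (op M)).obj (ModuleCat.of A A))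


lemma bridge_of_succ {A : Type u} [CommRing A] (X Y : ModuleCat.{u} A) (n : ℕ)
    (h : Subsingleton (((_root_.Ext.{u} A (ModuleCat.{u} A) (n+1)).obj (op X)).obj Y)) :
    Subsingleton (Abelian.Ext.{u} X Y (n+1)) := by
  let P := projectiveResolution X
  rw [← ModuleCat.isZero_iff_subsingleton, (P.isoExt (R := A) (n+1) Y).isZero_iff,
    ← HomologicalComplex.exactAt_iff_isZero_homology,
    HomologicalComplex.exactAt_iff' _ n (n+1) (n+2) (by simp) (by simp),
    ShortComplex.moduleCat_exact_iff] at h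
  constructor
  suffices ∀ f : Abelian.Ext X Y (n+1), f = 0 by intro f g; rw [this f, this g]
  intro f
  obtain ⟨f, hf, rfl⟩ := P.extMk_surjective f (n+2) rfl
  obtain ⟨g, hg⟩ := h f hf
  exact (P.extMk_eq_zero_iff f _ _ hf n rfl).2 ⟨g, hg⟩

lemma bridge_to {A : Type u} [CommRing A] (X Y : ModuleCat.{u} A) (n : ℕ)
    (h : Subsingleton (Abelian.Ext.{u} X Y n)) :
    Subsingleton (((_root_.Ext.{u} A (ModuleCat.{u} A) n).obj (op X)).obj Y) := by
  let P := projectiveResolution X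
  rw [← ModuleCat.isZero_iff_subsingleton, (P.isoExt (R := A) n Y).isZero_iff,
    ← HomologicalComplex.exactAt_iff_isZero_homology]
  cases n with
  | zero =>
    rw [HomologicalComplex.exactAt_iff' _ 0 0 1 (by simp) (by simp),
      ShortComplex.moduleCat_exact_iff]
    rw [Abelian.Ext.addEquiv₀.subsingleton_congr] at h
    intro (f : P.complex.X 0 ⟶ Y) (hf : P.complex.d 1 0 ≫ f = 0)
    have hz : f = 0 := by
      rw [← P.exact₀.g_desc f hf]
      have : P.exact₀.desc f hf = 0 := by
        change (id (P.exact₀.desc f hf) : X ⟶ Y) = 0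
        exact Subsingleton.elim _ _
      rw [this, Limits.comp_zero]
    refine ⟨0, ?_⟩
    rw [map_zero]
    exact hz.symm
  | succ n =>
    rw [HomologicalComplex.exactAt_iff' _ n (n+1) (n+2) (by simp) (by simp),
      ShortComplex.moduleCat_exact_iff]
    intro f hf
    exact (P.extMk_eq_zero_iff f (n+2) rfl hf n rfl).1 (Subsingleton.elim _ _)

open IsLocalRing Abelian in
/-- Nakayama step. -/
lemma ext_nakayama {A : Type u} [CommRing A] [IsNoetherianRing A] [IsLocalRing A]
    (M L : ModuleCat.{u} A) [Module.Finite A M] [Module.Finite A L] (x : A)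
    (reg : IsSMulRegular M x) (mem : x ∈ maximalIdeal A) (n : ℕ)
    (zero : Subsingleton (Abelian.Ext.{u} (ModuleCat.of A (QuotSMulTop x M)) L (n+1))) :
    Subsingleton (Abelian.Ext.{u} M L n) := by
  let S := M.smulShortComplex x
  have hS : S.ShortExact := reg.smulShortComplex_shortExact
  by_contra! ntr
  have : x ∈ (Module.annihilator A (Abelian.Ext M L n)).jacobson :=
    (IsLocalRing.maximalIdeal_le_jacobson _) mem
  absurd Submodule.top_ne_pointwise_smul_of_mem_jacobson_annihilator this
  rw [eq_comm, eq_top_iff]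
  intro y hy
  obtain ⟨z, hz⟩ := Abelian.Ext.contravariant_sequence_exact₁ hS L y (add_comm 1 n)
    (zero.elim _ _)
  have : S.f = x • 𝟙 M := rfl
  rw [this] at hz
  have hz' : x • z = y := by
    rw [← hz]
    erw [Ext.mk₀_smul, Ext.smul_comp, Ext.mk₀_id_comp]
    rfl
  rw [← hz']
  exact Submodule.smul_mem_pointwise_smul _ _ ⊤ trivial

open Abelian in
lemma ext_mid {A : Type u} [CommRing A] (L : ModuleCat.{u} A) (n : ℕ)
    {N₁ N₂ N₃ : Type u} [AddCommGroup N₁] [Module A N₁] [AddCommGroup N₂] [Module A N₂]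
    [AddCommGroup N₃] [Module A N₃] (f : N₁ →ₗ[A] N₂) (g : N₂ →ₗ[A] N₃)
    (hf : Function.Injective f) (hg : Function.Surjective g) (hfg : Function.Exact f g) 
    (h1 : Subsingleton (Ext.{u} (ModuleCat.of A N₁) L n))
    (h3 : Subsingleton (Ext.{u} (ModuleCat.of A N₃) L n)) :
    Subsingleton (Ext.{u} (ModuleCat.of A N₂) L n) := by
  let S := ModuleCat.shortComplexOfCompEqZero f g hfg.linearMap_comp_eq_zero
  have hS : S.ShortExact := ModuleCat.shortComplex_shortExact S hfg hf hg
  constructor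
  suffices ∀ y : Ext.{u} (ModuleCat.of A N₂) L n, y = 0 by intro a b; rw [this a, this b]
  intro y
  obtain ⟨z, hz⟩ := Ext.contravariant_sequence_exact₂ hS L y (h1.elim _ _)
  rw [← hz, h3.elim z 0]; exact Ext.comp_zero ..

open Abelian in
lemma ext_left {A : Type u} [CommRing A] (L : ModuleCat.{u} A) (n : ℕ)
    {N₁ N₂ N₃ : Type u} [AddCommGroup N₁] [Module A N₁] [AddCommGroup N₂] [Module A N₂]
    [AddCommGroup N₃] [Module A N₃] (f : N₁ →ₗ[A] N₂) (g : N₂ →ₗ[A] N₃)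
    (hf : Function.Injective f) (hg : Function.Surjective g) (hfg : Function.Exact f g) 
    (h2 : Subsingleton (Ext.{u} (ModuleCat.of A N₂) L n))
    (h3 : Subsingleton (Ext.{u} (ModuleCat.of A N₃) L (n+1))) :
    Subsingleton (Ext.{u} (ModuleCat.of A N₁) L n) := by
  let S := ModuleCat.shortComplexOfCompEqZero f g hfg.linearMap_comp_eq_zero
  have hS : S.ShortExact := ModuleCat.shortComplex_shortExact S hfg hf hg
  constructor
  suffices ∀ y : Ext.{u} (ModuleCat.of A N₁) L n, y = 0 by intro a b; rw [this a, this b]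
  intro y
  obtain ⟨z, hz⟩ := Ext.contravariant_sequence_exact₁ hS L y (add_comm 1 n) (h3.elim _ _)
  rw [← hz, h2.elim z 0]; exact Ext.comp_zero ..

open Abelian in
lemma ext_congr {A : Type u} [CommRing A] (L : ModuleCat.{u} A) (n : ℕ)
    {N₁ N₂ : Type u} [AddCommGroup N₁] [Module A N₁] [AddCommGroup N₂] [Module A N₂]
    (e : N₁ ≃ₗ[A] N₂)
    (h2 : Subsingleton (Ext.{u} (ModuleCat.of A N₂) L n)) :
    Subsingleton (Ext.{u} (ModuleCat.of A N₁) L n) := by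
  constructor
  suffices ∀ y : Ext.{u} (ModuleCat.of A N₁) L n, y = 0 by intro a b; rw [this a, this b]
  intro y
  have : (Ext.mk₀ e.toModuleIso.hom).comp ((Ext.mk₀ e.toModuleIso.inv).comp y (zero_add n))
    (zero_add n) = y := by
    rw [Ext.mk₀_comp_mk₀_assoc, Iso.hom_inv_id, Ext.mk₀_id_comp]
  rw [← this, h2.elim (Ext.comp _ y _) 0, Ext.comp_zero]

open Abelian in
lemma ext_zero {A : Type u} [CommRing A] (L : ModuleCat.{u} A) (n : ℕ)
    (N : Type u) [AddCommGroup N] [Module A N] [Subsingleton N] :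
    Subsingleton (Ext.{u} (ModuleCat.of A N) L n) := by
  constructor
  suffices ∀ y : Ext.{u} (ModuleCat.of A N) L n, y = 0 by intro a b; rw [this a, this b]
  intro y
  rw [← Ext.mk₀_id_comp y, (ModuleCat.isZero_of_subsingleton (ModuleCat.of A N)).eq_of_src (𝟙 _) 0,
    Ext.mk₀_zero, Ext.zero_comp]

/-- regular element modulo a prime -/
lemma reg_prime {A : Type u} [CommRing A] (p : Ideal A) [p.IsPrime] (y : A) (hy : y ∉ p) :
    IsSMulRegular (A ⧸ p) y := by
  refine (isSMulRegular_iff_right_eq_zero_of_smul ..).2 fun b hb => ?_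
  have h : (Ideal.Quotient.mk p y) * b = 0 := by rw [← hb, Algebra.smul_def]; rfl
  rcases mul_eq_zero.1 h with h | h
  · exact absurd (Ideal.Quotient.eq_zero_iff_mem.1 h) hy
  · exact h

open IsLocalRing in
lemma exists_not_mem {A : Type u} [CommRing A] [IsLocalRing A] (p : Ideal A) [hp : p.IsPrime]
    (h : p ≠ maximalIdeal A) : ∃ y ∈ maximalIdeal A, y ∉ p := by
  by_contra! hc
  exact h (le_antisymm (le_maximalIdeal hp.ne_top) hc)

open IsLocalRing Abelian in
/-- dévissage -/
lemma ext_devissage {A : Type u} [CommRing A] [IsNoetherianRing A] [IsLocalRing A]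
    (n : ℕ) (hk : Subsingleton (Ext.{u} (ModuleCat.of A (A ⧸ maximalIdeal A)) (ModuleCat.of A A) n))
    (e : WithBot ℕ∞)
    (hs : ∀ (N : Type u) [AddCommGroup N] [Module A N] [Module.Finite A N],
      Module.supportDim A N + 1 ≤ e →
      Subsingleton (Ext.{u} (ModuleCat.of A N) (ModuleCat.of A A) (n+1)))
    (N : Type u) [AddCommGroup N] [Module A N] [hN : Module.Finite A N]
      (he : Module.supportDim A N ≤ e) :
      Subsingleton (Ext.{u} (ModuleCat.of A N) (ModuleCat.of A A) n) := by
  revert he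
  refine IsNoetherianRing.induction_on_isQuotientEquivQuotientPrime A hN
    (motive := fun N _ _ _ => Module.supportDim A N ≤ e → 
      Subsingleton (Ext.{u} (ModuleCat.of A N) (ModuleCat.of A A) n)) ?_ ?_ ?_
  · intro N _ _ _ _ _
    exact ext_zero _ _ _
  · intro N _ _ _ p eq he
    refine ext_congr _ _ eq ?_
    rw [Module.supportDim_eq_of_equiv eq] at he
    by_cases h : p.1 = maximalIdeal A
    · rw [h]; exact hk
    · obtain ⟨y, hy, hyp⟩ := exists_not_mem p.1 h
      have reg := reg_prime p.1 y hyp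
      refine ext_nakayama (ModuleCat.of A (A ⧸ p.1)) (ModuleCat.of A A) y reg hy n (hs _ ?_)
      exact (Module.supportDim_quotSMulTop_succ_eq_supportDim reg hy).trans_le he
  · intro N₁ _ _ _ N₂ _ _ _ N₃ _ _ _ f g hf hg hfg h1 h3 he
    exact ext_mid _ _ f g hf hg hfg (h1 ((Module.supportDim_le_of_injective f hf).trans he))
      (h3 ((Module.supportDim_le_of_surjective g hg).trans he))

open IsLocalRing RingTheory.Sequence in
lemma exists_max_regular {A : Type u} [CommRing A] [IsNoetherianRing A] [IsLocalRing A]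
    (d : ℕ) (hd : ringKrullDim A = d) : ∃ rs : List A, IsRegular A rs ∧ rs.length ≤ d ∧
      ∀ rs' : List A, IsRegular A rs' → rs'.length ≤ rs.length := by
  classical
  have bd : ∀ rs : List A, IsRegular A rs → rs.length ≤ d := by
    intro rs h
    have h1 := ringKrullDim_add_length_eq_ringKrullDim_of_isRegular rs h
    rw [hd] at h1
    have : Nontrivial (A ⧸ Ideal.ofList rs) := by
      refine Ideal.Quotient.nontrivial_iff.2 fun hc => h.top_ne_smul ?_
      rw [hc]; simp
    have h2 : 0 ≤ ringKrullDim (A ⧸ Ideal.ofList rs) := ringKrullDim_nonneg_of_nontrivial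
    have h3 : ((rs.length : ℕ) : WithBot ℕ∞) ≤ (d : ℕ) := by
      rw [← h1]; exact le_add_of_nonneg_left h2
    exact_mod_cast h3
  let P : ℕ → Prop := fun n => ∃ rs : List A, IsRegular A rs ∧ rs.length = n
  have h0 : P 0 := ⟨[], by simp [isRegular_iff], rfl⟩
  obtain ⟨rs, hr, hl⟩ := Nat.findGreatest_spec (P := P) (Nat.zero_le d) h0
  refine ⟨rs, hr, bd rs hr, fun rs' h' => ?_⟩
  rw [hl]
  exact Nat.le_findGreatest (bd rs' h') ⟨rs', h', rfl⟩

open IsLocalRing RingTheory.Sequence in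
lemma mem_max_of_regular {A : Type u} [CommRing A] [IsLocalRing A] (rs : List A)
    (reg : IsRegular A rs) : Ideal.ofList rs ≤ maximalIdeal A := by
  refine le_maximalIdeal fun hc => reg.top_ne_smul ?_
  rw [hc]; simp

open IsLocalRing RingTheory.Sequence in
lemma exists_residue_inj {A : Type u} [CommRing A] [IsNoetherianRing A] [IsLocalRing A]
    (rs : List A) (reg : IsRegular A rs)
    (hmax : ∀ rs' : List A, IsRegular A rs' → rs'.length ≤ rs.length) :
    ∃ f : (A ⧸ maximalIdeal A) →ₗ[A] (A ⧸ (Ideal.ofList rs • ⊤ : Submodule A A)),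
      Function.Injective f := by
  have hns : ¬ Subsingleton
      ((A ⧸ maximalIdeal A) →ₗ[A] (A ⧸ (Ideal.ofList rs • ⊤ : Submodule A A))) := by
    intro hs
    obtain ⟨x, hx, hxr⟩ := IsSMulRegular.subsingleton_linearMap_iff.1 hs
    rw [Ideal.annihilator_quotient] at hx
    have hw : IsWeaklyRegular A (rs ++ [x]) := by
      rw [isWeaklyRegular_append_iff, isWeaklyRegular_singleton_iff]
      exact ⟨reg.1, hxr⟩
    have := hmax _ (IsRegular.of_isWeaklyRegular_of_mem_maximalIdeal A (by
      intro r hr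
      rcases List.mem_append.1 hr with hr | hr
      · exact mem_max_of_regular rs reg (Ideal.subset_span hr)
      · rw [List.mem_singleton.1 hr]; exact hx) hw)
    simp at this
  rw [not_subsingleton_iff_nontrivial] at hns
  obtain ⟨f, hf⟩ := exists_ne (0 : (A ⧸ maximalIdeal A) →ₗ[A]
    (A ⧸ (Ideal.ofList rs • ⊤ : Submodule A A)))
  have : IsSimpleModule A (A ⧸ maximalIdeal A) :=
    isSimpleModule_iff_isCoatom.2 (maximalIdeal.isMaximal A).out
  exact ⟨f, (LinearMap.injective_or_eq_zero f).resolve_right hf⟩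

open IsLocalRing RingTheory.Sequence Abelian in
lemma ext_above {A : Type u} [CommRing A] [IsNoetherianRing A] [IsLocalRing A]
    (n : ℕ) (hn : ∀ i, n < i → ∀ M : ModuleCat.{u} A,
      Subsingleton (Ext.{u} M (ModuleCat.of A A) i))
    (rs : List A) (reg : IsRegular A rs)
    (hmax : ∀ rs' : List A, IsRegular A rs' → rs'.length ≤ rs.length) (k : ℕ) :
    ∀ i, rs.length < i → n < i + k → ∀ (N : Type u) [AddCommGroup N] [Module A N]
      [Module.Finite A N], Subsingleton (Ext.{u} (ModuleCat.of A N) (ModuleCat.of A A) i) := by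
  induction k with
  | zero => intro i _ h N _ _ _; exact hn i h _
  | succ k ih =>
    intro i hi h N _ _ _
    refine ext_devissage i ?_ ⊤ (fun N _ _ _ _ => ih (i+1) (by omega) (by omega) N) N le_top
    obtain ⟨f, hf⟩ := exists_residue_inj rs reg hmax
    refine ext_left _ i f (LinearMap.range f).mkQ hf (Submodule.mkQ_surjective _)
      f.exact_map_mkQ_range ?_ (ih (i+1) (by omega) (by omega) _)
    have hpd := ModuleCat.projectiveDimension_quotient_eq_add_length_of_isWeaklyRegular
      (ModuleCat.of A A) rs reg.1 (fun r hr => mem_max_of_regular rs reg (Ideal.subset_span hr))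
    have hz : projectiveDimension (ModuleCat.of A A) = 0 :=
      ModuleCat.projectiveDimension_eq_zero_of_projective _
    rw [hz, zero_add] at hpd
    have hlt : HasProjectiveDimensionLT (ModuleCat.of A
        ((ModuleCat.of A A) ⧸ (Ideal.ofList rs • ⊤ : Submodule A (ModuleCat.of A A)))) i := by
      rw [← projectiveDimension_lt_iff, hpd]
      exact_mod_cast hi
    exact HasProjectiveDimensionLT.subsingleton _ i i le_rfl _

open IsLocalRing RingTheory.Sequence Abelian in
lemma gor_cm {A : Type u} [CommRing A] [IsNoetherianRing A] [IsLocalRing A]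
    (n : ℕ) (hn : ∀ i, n < i → ∀ M : ModuleCat.{u} A,
      Subsingleton (Ext.{u} M (ModuleCat.of A A) i))
    (d : ℕ) (hd : ringKrullDim A = d) : ∃ rs : List A, IsRegular A rs ∧ rs.length = d := by
  obtain ⟨rs, reg, hle, hmax⟩ := exists_max_regular d hd
  refine ⟨rs, reg, ?_⟩
  have hab := ext_above n hn rs reg hmax
  have key : ∀ p : Ideal A, p.IsPrime → Ideal.ofList rs ≤ p → p = maximalIdeal A := by
    intro p hp hI
    by_contra h
    obtain ⟨y, hy, hyp⟩ := exists_not_mem p h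
    have hr := reg_prime p y hyp
    have htop : Subsingleton (Ext.{u} (ModuleCat.of A (A ⧸ p)) (ModuleCat.of A A) rs.length) :=
      ext_nakayama (ModuleCat.of A (A ⧸ p)) (ModuleCat.of A A) y hr hy _
        (hab (n+1) (rs.length + 1) (by omega) (by omega) _)
    have hsupp : Module.support A (A ⧸ p) = PrimeSpectrum.zeroLocus p := by
      rw [Module.support_eq_zeroLocus, Ideal.annihilator_quotient]
    have hlow := ModuleCat.subsingleton_ext_of_exists_isRegular (Ideal.ofList rs)
      (ModuleCat.of A (A ⧸ p)) (hsupp.subset.trans (PrimeSpectrum.zeroLocus_anti_mono hI))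
      (ModuleCat.of A A) reg.top_ne_smul.symm.lt_top rs (fun r hr => Ideal.subset_span hr) reg
    obtain ⟨rs', hl, -, hreg'⟩ := ModuleCat.exists_isRegular_of_exists_subsingleton_ext p
      (rs.length + 1) (ModuleCat.of A A)
      (by
        refine lt_top_iff_ne_top.2 fun hc => hp.ne_top ?_
        simpa using! hc) (ModuleCat.of A (A ⧸ p)) hsupp (by
        intro i hi
        rcases Nat.lt_succ_iff_lt_or_eq.1 hi with hi | rfl
        · exact hlow i hi
        · exact htop)
    have := hmax rs' hreg'
    omega
  have h1 := ringKrullDim_add_length_eq_ringKrullDim_of_isRegular rs reg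
  have h0 : ringKrullDim (A ⧸ Ideal.ofList rs) = 0 := by
    rw [ringKrullDim_quotient]
    have : Subsingleton (PrimeSpectrum.zeroLocus (Ideal.ofList rs : Set A)) := by
      refine ⟨fun a b => Subtype.ext (PrimeSpectrum.ext ?_)⟩
      rw [key _ a.1.2 a.2, key _ b.1.2 b.2]
    have : Nonempty (PrimeSpectrum.zeroLocus (Ideal.ofList rs : Set A)) :=
      ⟨⟨⟨maximalIdeal A, inferInstance⟩, mem_max_of_regular rs reg⟩⟩
    exact Order.krullDim_eq_zero
  rw [h0, zero_add, hd] at h1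
  exact_mod_cast h1

open IsLocalRing RingTheory.Sequence Abelian in
lemma ischebeck {A : Type u} [CommRing A] [IsNoetherianRing A] [IsLocalRing A]
    (rs : List A) (reg : IsRegular A rs) (e : ℕ) : ∀ v : ℕ, v + e < rs.length →
    ∀ (N : Type u) [AddCommGroup N] [Module A N]
      [Module.Finite A N], Module.supportDim A N ≤ e →
      Subsingleton (Ext.{u} (ModuleCat.of A N) (ModuleCat.of A A) v) := by
  induction e with
  | zero =>
    intro v hv N _ _ _ hN
    refine ext_devissage v ?_ (0 : ℕ) ?_ N hN
    · refine ModuleCat.subsingleton_ext_of_exists_isRegular (maximalIdeal A)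
        (ModuleCat.of A (A ⧸ maximalIdeal A)) ?_ (ModuleCat.of A A) ?_ rs
        (fun r hr => mem_max_of_regular rs reg (Ideal.subset_span hr)) reg v (by omega)
      · change Module.support A (A ⧸ maximalIdeal A) ⊆ _
        rw [Module.support_eq_zeroLocus, Ideal.annihilator_quotient]
      · refine lt_top_iff_ne_top.2 fun hc => (maximalIdeal.isMaximal A).ne_top ?_
        simpa using! hc
    · intro N _ _ _ h
      have : Module.supportDim A N = ⊥ := by simpa using h
      have := (Module.supportDim_eq_bot_iff_subsingleton A N).1 this
      exact ext_zero _ _ _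
  | succ e ih =>
    intro v hv N _ _ _ hN
    refine ext_devissage v ?_ (e + 1 : ℕ) ?_ N hN
    · refine ih v (by omega) _ ?_
      rw [Module.supportDim_quotient_eq_ringKrullDim,
        ringKrullDim_eq_zero_of_isField ((Ideal.Quotient.maximal_ideal_iff_isField_quotient _).1 (maximalIdeal.isMaximal A))]
      exact_mod_cast Nat.zero_le e
    · intro N _ _ _ h
      refine ih (v+1) (by omega) N ?_
      have h' : Module.supportDim A N + (1:ℕ) ≤ e + (1 : ℕ) := by exact_mod_cast h
      exact ENat.WithBot.add_le_add_natCast_right_iff.1 h'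

theorem stmt10 (A : Type u) [CommRing A] [IsNoetherianRing A] [IsLocalRing A]
    (hGor : HasFiniteSelfInjDim A) (d : ℕ) (hd : ringKrullDim A = d)
    (N : Type u) [AddCommGroup N] [Module A N] [Module.Finite A N] [Nontrivial N]
    (e : ℕ) (he : ringKrullDim (A ⧸ Module.annihilator A N) = e) :
    ∀ v : ℕ, v + e < d → Subsingleton (extPow A N v) := by
  obtain ⟨n, hn⟩ := hGor
  obtain ⟨rs, reg, hl⟩ := gor_cm n (fun i hi M => by
    obtain ⟨j, rfl⟩ : ∃ j, i = j + 1 := ⟨i - 1, by omega⟩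
    exact bridge_of_succ _ _ _ (hn M _ hi)) d hd
  intro v hv
  refine bridge_to _ _ _ (ischebeck rs reg e v (by omega) N ?_)
  rw [Module.supportDim_eq_ringKrullDim_quotient_annihilator, he]


end
end

section
/- Let A be a Gorenstein commutative Noetherian local ring of Krull dimension d, N a finitely generated A-module, and j a natural number. If Ext^j_A(N, A) ≠ 0, then dim Ext^j_A(N, A) ≤ d − j, where dim denotes the Krull dimension of A modulo the annihilator of the module. -/
/-!
STATEMENT 11: Let A be a Gorenstein commutative Noetherian local ring of Krull dimension d,
N a finitely generated A-module, and j a natural number. If Ext^j_A(N, A) ≠ 0, then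
dim Ext^j_A(N, A) ≤ d − j (formalized as dim Ext^j_A(N, A) + j ≤ d), where dim denotes the
Krull dimension of A modulo the annihilator of the module.
-/

open CategoryTheory Opposite

noncomputable section

universe u

section
variable (A : Type u) [CommRing A]

noncomputable def cmpMap {X Y : ModuleCat.{u} A} (P : ProjectiveResolution X) (n i : ℕ) :
   LinearMap.ker ((P.complex.linearYonedaObj A Y).sc' i n (n+1)).g.hom →ₗ[A] Abelian.Ext.{u} X Y n where
  toFun f := P.extMk (f.1 : P.complex.X n ⟶ Y) (n+1) rfl f.2
  map_add' f g := (P.add_extMk _ _ _ _ _ _).symm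
  map_smul' r f := by
    refine Eq.trans ?_ (Abelian.Ext.smul_eq_comp_mk₀ _ _).symm
    refine Eq.trans ?_ (P.extMk_comp_mk₀ (f.1 : P.complex.X n ⟶ Y) (n+1) rfl f.2 (r • 𝟙 Y)).symm
    have h : ((r • f).1 : P.complex.X n ⟶ Y) = (f.1 : P.complex.X n ⟶ Y) ≫ (r • 𝟙 Y) := by
      exact ((Linear.comp_smul _ _ _ (f.1 : P.complex.X n ⟶ Y) r (𝟙 Y)).trans
        (congrArg (r • ·) (Category.comp_id (f.1 : P.complex.X n ⟶ Y)))).symm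
    congr 1

lemma extMk_zero_iff {X Y : ModuleCat.{u} A} (P : ProjectiveResolution X) (f : P.complex.X 0 ⟶ Y) (m : ℕ) (hm : 0 + 1 = m)
    (hf : P.complex.d m 0 ≫ f = 0) : P.extMk f m hm hf = 0 ↔ f = 0 := by
  constructor
  · intro h
    rw [← P.extEquivCohomologyClass.apply_eq_iff_eq,
      P.extEquivCohomologyClass_extMk, P.extEquivCohomologyClass_zero,
      CochainComplex.HomComplex.CohomologyClass.mk_eq_zero_iff,
      CochainComplex.HomComplex.Cocycle.toSingleMk_mem_coboundaries_iff _ _ _ _ _ 1 (by simp)] at h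
    obtain ⟨g, hg⟩ := h
    have hz : Limits.IsZero (P.cochainComplex.X 1) := P.cochainComplex.isZero_of_isStrictlyLE 0 1
    rw [hz.eq_of_src g 0, Limits.comp_zero] at hg
    rw [← cancel_epi (P.cochainComplexXIso (-((0:ℕ):ℤ)) 0 rfl).hom]
    rw [← hg]; simp
  · rintro rfl; simp

lemma cmpMap_surj {X Y : ModuleCat.{u} A} (P : ProjectiveResolution X) (n i : ℕ) :
   Function.Surjective (cmpMap A (Y := Y) P n i) := by
  intro α
  obtain ⟨f, hf, rfl⟩ := P.extMk_surjective α (n+1) rfl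
  exact ⟨⟨f, hf⟩, rfl⟩

lemma cmpMap_ker {X Y : ModuleCat.{u} A} (P : ProjectiveResolution X) (n i : ℕ)
    (hi : (ComplexShape.up ℕ).prev n = i) :
   LinearMap.ker (cmpMap A (Y := Y) P n i) = 
     LinearMap.range ((P.complex.linearYonedaObj A Y).sc' i n (n+1)).moduleCatToCycles := by
  ext ⟨f, hf⟩
  rw [LinearMap.mem_ker, LinearMap.mem_range]
  rcases n with _ | n
  · refine (extMk_zero_iff A P f 1 rfl hf).trans ?_
    have hi0 : i = 0 := by simpa using hi.symm
    subst hi0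
    have : ((P.complex.linearYonedaObj A Y).sc' 0 0 (0+1)).f = 0 :=
      (P.complex.linearYonedaObj A Y).shape _ _ (by simp)
    constructor
    · rintro rfl
      exact ⟨0, by ext1; rw [map_zero]; rfl⟩
    · rintro ⟨x, hx⟩
      have h2 := congrArg Subtype.val hx
      have h3 : ((P.complex.linearYonedaObj A Y).sc' 0 0 (0+1)).f.hom x = 0 := by
        rw [this]; rfl
      exact h2.symm.trans h3
  · have hi0 : i = n := by simpa using hi.symm
    subst hi0
    refine (P.extMk_eq_zero_iff f _ rfl hf i rfl).trans ?_
    constructor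
    · rintro ⟨g, hg⟩
      exact ⟨g, Subtype.ext hg⟩
    · rintro ⟨g, hg⟩
      exact ⟨g, congrArg Subtype.val hg⟩

lemma ext_cmp (X Y : ModuleCat.{u} A) (n : ℕ) :
    Nonempty ((((_root_.Ext.{u} A (ModuleCat.{u} A) n).obj (op X)).obj Y) ≃ₗ[A] Abelian.Ext.{u} X Y n) := by
  let P := projectiveResolution X
  let K := (P.complex.linearYonedaObj A Y)
  let i := (ComplexShape.up ℕ).prev n
  let S := K.sc' i n (n+1)
  have e1 := P.isoExt (R := A) n Y
  have e2 : K.homology n ≅ S.homology :=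
    ShortComplex.homologyMapIso (K.isoSc' i n (n+1) rfl (by simp))
  have e3 := S.moduleCatHomologyIso
  have e4 := (e1 ≪≫ e2 ≪≫ e3).toLinearEquiv
  exact ⟨e4.trans ((Submodule.quotEquivOfEq _ _ (cmpMap_ker A P n i rfl).symm).trans
    (LinearMap.quotKerEquivOfSurjective _ (cmpMap_surj A P n i)))⟩

end

section
open IsLocalRing Module
variable {A : Type u} [CommRing A]

/-- Ext into the ring itself. -/
abbrev EE (A : Type u) [CommRing A] (M : Type u) [AddCommGroup M] [Module A M] (j : ℕ) : Type u :=
  Abelian.Ext.{u} (ModuleCat.of A M) (ModuleCat.of A A) j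

lemma EE_subsingleton (M : Type u) [AddCommGroup M] [Module A M] [Subsingleton M] (j : ℕ) :
    Subsingleton (EE A M j) := by
  have : Limits.IsZero (ModuleCat.of A M) := ModuleCat.isZero_of_subsingleton _
  refine subsingleton_of_forall_eq 0 fun x => ?_
  rw [← Abelian.Ext.mk₀_id_comp x, this.eq_of_src (𝟙 _) 0, Abelian.Ext.mk₀_zero,
    Abelian.Ext.zero_comp]

/-- functoriality -/
def EEmap {M N : Type u} [AddCommGroup M] [Module A M] [AddCommGroup N] [Module A N]
    (f : M →ₗ[A] N) (j : ℕ) : EE A N j →ₗ[A] EE A M j :=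
  (Abelian.Ext.mk₀ (ModuleCat.ofHom f)).precompOfLinear A (ModuleCat.of A A) (zero_add j)

def EEequiv {M N : Type u} [AddCommGroup M] [Module A M] [AddCommGroup N] [Module A N]
    (e : M ≃ₗ[A] N) (j : ℕ) : EE A N j ≃ₗ[A] EE A M j :=
  LinearEquiv.ofLinearMap (EEmap e.toLinearMap j) (EEmap e.symm.toLinearMap j)
   (by
    ext x
    change (Abelian.Ext.mk₀ _).comp ((Abelian.Ext.mk₀ _).comp x (zero_add j)) (zero_add j) = x
    rw [Abelian.Ext.mk₀_comp_mk₀_assoc, ← ModuleCat.ofHom_comp]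
    simp)
   (by
    ext x
    change (Abelian.Ext.mk₀ _).comp ((Abelian.Ext.mk₀ _).comp x (zero_add j)) (zero_add j) = x
    rw [Abelian.Ext.mk₀_comp_mk₀_assoc, ← ModuleCat.ofHom_comp]
    simp)

lemma mk₀_smul_comp (M : Type u) [AddCommGroup M] [Module A M] (x : A) (j : ℕ) (z : EE A M j) :
    (Abelian.Ext.mk₀ (x • 𝟙 (ModuleCat.of A M))).comp z (zero_add j) = x • z := by
  rw [Abelian.Ext.mk₀_smul, Abelian.Ext.smul_comp, Abelian.Ext.mk₀_id_comp]

section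
variable {N₁ N₂ N₃ : Type u} [AddCommGroup N₁] [Module A N₁] [AddCommGroup N₂] [Module A N₂]
  [AddCommGroup N₃] [Module A N₃] {f : N₁ →ₗ[A] N₂} {g : N₂ →ₗ[A] N₃}
  (hf : Function.Injective f) (hg : Function.Surjective g) (h : Function.Exact f g)
include hf hg h

lemma sc_exact : (ModuleCat.shortComplexOfCompEqZero f g h.linearMap_comp_eq_zero).ShortExact :=
  ModuleCat.shortComplex_shortExact _ h hf hg

lemma EE_exact_mid (j : ℕ) : Function.Exact (EEmap g j) (EEmap f j) := by
  intro x
  constructor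
  · intro hx
    exact Abelian.Ext.contravariant_sequence_exact₂ (sc_exact hf hg h) _ x hx
  · rintro ⟨y, rfl⟩
    change (Abelian.Ext.mk₀ _).comp ((Abelian.Ext.mk₀ _).comp y (zero_add j)) (zero_add j) = 0
    rw [Abelian.Ext.mk₀_comp_mk₀_assoc, ← ModuleCat.ofHom_comp, h.linearMap_comp_eq_zero]
    simp

lemma EE_surj (j : ℕ) (hs : Subsingleton (EE A N₃ (j+1))) : Function.Surjective (EEmap f j) := by
  intro x
  exact Abelian.Ext.contravariant_sequence_exact₁ (sc_exact hf hg h) _ x (add_comm 1 j)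
    (hs.elim _ _)

lemma EE_sub3 (j : ℕ) (h1 : Subsingleton (EE A N₁ j)) (h2 : Subsingleton (EE A N₂ (j+1))) :
    Subsingleton (EE A N₃ (j+1)) := by
  refine subsingleton_of_forall_eq 0 fun x => ?_
  obtain ⟨y, rfl⟩ := Abelian.Ext.contravariant_sequence_exact₃ (sc_exact hf hg h) _ x
    (h2.elim _ _) (add_comm 1 j)
  rw [h1.elim y 0, Abelian.Ext.comp_zero]

end

lemma supportDim_le_of_exact {E₁ E₂ E₃ : Type u} [AddCommGroup E₁] [Module A E₁]
    [AddCommGroup E₂] [Module A E₂]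
    [AddCommGroup E₃] [Module A E₃] {f : E₁ →ₗ[A] E₂} {g : E₂ →ₗ[A] E₃}
    (h : Function.Exact f g) : supportDim A E₂ ≤ max (supportDim A E₁) (supportDim A E₃) := by
  have key : support A E₂ ⊆ support A E₁ ∪ support A E₃ := by
    have h1 : support A E₂ = support A (LinearMap.ker g) ∪ support A (LinearMap.range g) :=
      Module.support_of_exact (f := (LinearMap.ker g).subtype) (g := g.rangeRestrict)
        (by intro x; simp [Subtype.ext_iff]) (Subtype.val_injective) g.surjective_rangeRestrict
    rw [h1]
    refine Set.union_subset_union ?_ ?_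
    · rw [LinearMap.exact_iff.mp h]
      exact Module.support_subset_of_surjective _ f.surjective_rangeRestrict
    · exact Module.support_subset_of_injective _ (LinearMap.range g).subtype_injective
  refine iSup_le fun p => ?_
  rcases key p.head.2 with hp | hp
  · refine le_trans ?_ (le_max_left _ _)
    exact le_iSup (fun q : LTSeries (support A E₁) => ((q.length : ℕ∞) : WithBot ℕ∞))
      (LTSeries.mk p.length (fun i => ⟨(p i).1, mem_support_mono (p.monotone (Fin.zero_le i)) hp⟩)
        (fun i j hij => p.strictMono hij))
  · refine le_trans ?_ (le_max_right _ _)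
    exact le_iSup (fun q : LTSeries (support A E₃) => ((q.length : ℕ∞) : WithBot ℕ∞))
      (LTSeries.mk p.length (fun i => ⟨(p i).1, mem_support_mono (p.monotone (Fin.zero_le i)) hp⟩)
        (fun i j hij => p.strictMono hij))

variable [IsNoetherianRing A] [IsLocalRing A]

instance (M : Type u) [AddCommGroup M] [Module A M] [Module.Finite A M] (j : ℕ) :
    Module.Finite A (EE A M j) :=
  ModuleCat.finite_ext A (ModuleCat.of A M) (ModuleCat.of A A) j

open Pointwise in
lemma EE_step (M : Type u) [AddCommGroup M] [Module A M] [Module.Finite A M] {x : A}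
    (hx : x ∈ maximalIdeal A) (reg : IsSMulRegular M x) (j : ℕ) :
    supportDim A (EE A M j) ≤ supportDim A (EE A (QuotSMulTop x M) (j+1)) + 1 := by
  have reg' : IsSMulRegular (ModuleCat.of A M) x := reg
  let δ : EE A M j →ₗ[A] EE A (QuotSMulTop x M) (j+1) :=
    reg'.smulShortComplex_shortExact.extClass.precompOfLinear A (ModuleCat.of A A) (add_comm 1 j)
  have hδ (y : EE A M j) (hy : δ y = 0) : y ∈ x • (⊤ : Submodule A (EE A M j)) := by
    obtain ⟨z, hz⟩ := Abelian.Ext.contravariant_sequence_exact₁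
      reg'.smulShortComplex_shortExact _ y (add_comm 1 j) hy
    rw [ModuleCat.smulShortComplex_f_eq_smul_id] at hz
    rw [Submodule.mem_smul_pointwise_iff_exists]
    refine ⟨z, trivial, ?_⟩
    rw [← hz]
    exact (mk₀_smul_comp M x j z).symm
  have hδ2 (z : EE A M j) : δ (x • z) = 0 := by
    change reg'.smulShortComplex_shortExact.extClass.comp (x • z) (add_comm 1 j) = 0
    have : x • z = (Abelian.Ext.mk₀ (ModuleCat.smulShortComplex (ModuleCat.of A M) x).f).comp z (zero_add j) := by
      exact (mk₀_smul_comp M x j z).symm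
    rw [this]
    exact reg'.smulShortComplex_shortExact.extClass_comp_assoc z
  refine (supportDim_le_supportDim_quotSMulTop_succ hx).trans ?_
  gcongr
  have hk : x • (⊤ : Submodule A (EE A M j)) = LinearMap.ker δ := by
    apply le_antisymm
    · intro y hy
      obtain ⟨z, -, rfl⟩ := (Submodule.mem_smul_pointwise_iff_exists _ _ _).mp hy
      exact hδ2 z
    · intro y hy; exact hδ y hy
  refine supportDim_le_of_injective (Submodule.liftQ _ δ hk.le) ?_
  exact LinearMap.ker_eq_bot.mp (Submodule.ker_liftQ_eq_bot _ _ _ hk.ge)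

lemma EE_step' (M : Type u) [AddCommGroup M] [Module A M] [Module.Finite A M] {x : A}
    (hx : x ∈ maximalIdeal A) (reg : IsSMulRegular M x) (j : ℕ)
    (h : Subsingleton (EE A (QuotSMulTop x M) (j+1))) : Subsingleton (EE A M j) := by
  have := EE_step M hx reg j
  rw [supportDim_eq_bot_of_subsingleton A (EE A (QuotSMulTop x M) (j+1))] at this
  rw [← supportDim_eq_bot_iff_subsingleton (R := A)]
  simpa using this

lemma exists_reg (p : PrimeSpectrum A) (hp : p.1 ≠ maximalIdeal A) :
    ∃ x ∈ maximalIdeal A, IsSMulRegular (A ⧸ p.1) x := by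
  obtain ⟨x, hx, hxp⟩ := Set.not_subset.mp
    (fun h : (maximalIdeal A : Set A) ⊆ p.1 => hp (le_antisymm (le_maximalIdeal p.2.ne_top) h))
  refine ⟨x, hx, ?_⟩
  intro a b hab
  obtain ⟨a, rfl⟩ := Ideal.Quotient.mk_surjective a
  obtain ⟨b, rfl⟩ := Ideal.Quotient.mk_surjective b
  have hab' : Ideal.Quotient.mk p.1 (x * a) = Ideal.Quotient.mk p.1 (x * b) := hab
  rw [Ideal.Quotient.eq] at hab' ⊢
  rw [← mul_sub] at hab'
  exact (p.2.mem_or_mem hab').resolve_left hxp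

/-- vanishing for the residue field implies vanishing, at the top degree. -/
lemma EE_of_res (r : ℕ)
    (h1 : ∀ (N : Type u) [AddCommGroup N] [Module A N] [Module.Finite A N],
      Subsingleton (EE A N (r+1)))
    (h0 : Subsingleton (EE A (A ⧸ maximalIdeal A) r))
    (N : Type u) [AddCommGroup N] [Module A N] [hN : Module.Finite A N] :
    Subsingleton (EE A N r) := by
  induction hN using IsNoetherianRing.induction_on_isQuotientEquivQuotientPrime A with
  | subsingleton N => exact EE_subsingleton N r
  | quotient N p e =>
    refine (EEequiv e r).symm.toEquiv.subsingleton_congr.mpr ?_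
    by_cases hp : p.1 = maximalIdeal A
    · rw [hp]; exact h0
    · obtain ⟨x, hx, reg⟩ := exists_reg p hp
      exact EE_step' _ hx reg r (h1 _)
  | exact N₁ N₂ N₃ f g hf hg hfg i1 i3 =>
    rw [← supportDim_eq_bot_iff_subsingleton (R := A)]
    have := supportDim_le_of_exact (EE_exact_mid hf hg hfg r)
    simpa [supportDim_eq_bot_of_subsingleton] using this

lemma top_le (r d : ℕ)
    (h1 : ∀ (N : Type u) [AddCommGroup N] [Module A N] [Module.Finite A N],
      Subsingleton (EE A N (r+1)))
    (h0 : Nontrivial (EE A (A ⧸ maximalIdeal A) r)) (k : ℕ) :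
    ∀ (s : ℕ) (_ : d < s + k) (M : Type u) [AddCommGroup M] [Module A M] [Module.Finite A M]
      [Nontrivial M] (_ : supportDim A M + ((s : ℕ∞) : WithBot ℕ∞) ≤ ((d : ℕ∞) : WithBot ℕ∞))
      (_ : ∀ i > s, Subsingleton (EE A M i)), r ≤ d := by
  have hsd (s : ℕ) (M : Type u) [AddCommGroup M] [Module A M] [Nontrivial M]
      (hd : supportDim A M + ((s : ℕ∞) : WithBot ℕ∞) ≤ ((d : ℕ∞) : WithBot ℕ∞)) : s ≤ d := by
    have h2 : (0 : WithBot ℕ∞) ≤ supportDim A M := by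
      obtain ⟨n, hn⟩ := WithBot.ne_bot_iff_exists.mp (supportDim_ne_bot_of_nontrivial A M)
      rw [← hn]; exact_mod_cast zero_le
    have h3 : (0 : WithBot ℕ∞) + ((s : ℕ∞) : WithBot ℕ∞) ≤ ((d : ℕ∞) : WithBot ℕ∞) :=
      le_trans (by gcongr) hd
    rw [zero_add] at h3
    exact_mod_cast h3
  induction k with
  | zero =>
    intro s hs M _ _ _ _ hd hv
    have := hsd s M hd
    omega
  | succ k ih =>
    intro s hs M _ _ _ _ hd hv
    have hs' := hsd s M hd
    rcases subsingleton_or_nontrivial ((A ⧸ maximalIdeal A) →ₗ[A] M) with hS | hS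
    · obtain ⟨x, hx, reg⟩ := IsSMulRegular.subsingleton_linearMap_iff.mp hS
      rw [Ideal.annihilator_quotient] at hx
      have hdim := supportDim_quotSMulTop_succ_eq_supportDim reg hx
      have hnt : Nontrivial (QuotSMulTop x M) := by
        rw [← supportDim_ne_bot_iff_nontrivial A]
        intro hb
        rw [hb] at hdim
        exact supportDim_ne_bot_of_nontrivial A M (by rw [← hdim]; simp)
      refine ih (s+1) (by omega) (QuotSMulTop x M) ?_ ?_
      · rw [← hdim] at hd
        refine le_trans (le_of_eq ?_) hd
        push_cast
        rw [add_assoc, add_comm (1 : WithBot ℕ∞)]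
      · intro i hi
        obtain ⟨i, rfl⟩ : ∃ t, i = t + 1 := ⟨i - 1, by omega⟩
        exact EE_sub3 (f := LinearMap.lsmul A M x) (g := Submodule.mkQ _) reg
          (Submodule.mkQ_surjective _) (LinearMap.exact_lsmul_mkQ_smul_top M x) i
          (hv i (by omega)) (hv (i+1) (by omega))
    · obtain ⟨f, hf⟩ := exists_ne (0 : (A ⧸ maximalIdeal A) →ₗ[A] M)
      have : IsSimpleModule A (A ⧸ maximalIdeal A) :=
        isSimpleModule_iff_isCoatom.mpr (maximalIdeal.isMaximal A).out
      have hinj := LinearMap.injective_of_ne_zero hf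
      have hsurj := EE_surj hinj (Submodule.mkQ_surjective (LinearMap.range f))
        (LinearMap.exact_map_mkQ_range f) r (h1 _)
      by_contra hlt
      have := hv r (by omega)
      have := hsurj.subsingleton
      exact not_subsingleton _ this

/-- bounded by the dimension -/
lemma exists_bound (d : ℕ) (hd : ringKrullDim A = d) (n : ℕ)
    (hn : ∀ (N : Type u) [AddCommGroup N] [Module A N] [Module.Finite A N] (i : ℕ), n < i →
      Subsingleton (EE A N i)) :
    ∀ (N : Type u) [AddCommGroup N] [Module A N] [Module.Finite A N] (i : ℕ), d < i →
      Subsingleton (EE A N i) := by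
  induction n with
  | zero => intro N _ _ _ i hi; exact hn N i (by omega)
  | succ r ih =>
    by_cases hr : r + 1 ≤ d
    · intro N _ _ _ i hi; exact hn N i (by omega)
    refine ih ?_
    intro N _ _ _ i hi
    rcases Nat.lt_or_ge (r+1) i with h | h
    · exact hn N i h
    obtain rfl : i = r + 1 := by omega
    refine EE_of_res (r+1) (fun N _ _ _ => hn N _ (by omega)) ?_ N
    by_contra hns
    rw [not_subsingleton_iff_nontrivial] at hns
    refine hr (top_le (r+1) d (fun N _ _ _ => hn N _ (by omega)) hns (d+1) 0 (by omega) A ?_ ?_)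
    · rw [supportDim_self_eq_ringKrullDim, hd]; simp
    · intro i hi
      obtain ⟨i, rfl⟩ : ∃ t, i = t + 1 := ⟨i - 1, by omega⟩
      have : Projective (ModuleCat.of A A) := inferInstance
      exact subsingleton_of_forall_eq 0 fun x => Abelian.Ext.eq_zero_of_projective x

lemma EE_bound (r : ℕ)
    (h1 : ∀ (N : Type u) [AddCommGroup N] [Module A N] [Module.Finite A N] (i : ℕ), r < i →
      Subsingleton (EE A N i)) (k : ℕ) :
    ∀ (j : ℕ) (_ : r + 1 ≤ j + k) (N : Type u) [AddCommGroup N] [Module A N] [Module.Finite A N],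
      supportDim A (EE A N j) + ((j : ℕ∞) : WithBot ℕ∞) ≤ ((r : ℕ∞) : WithBot ℕ∞) := by
  induction k with
  | zero =>
    intro j hj N _ _ _
    have := h1 N j (by omega)
    rw [supportDim_eq_bot_of_subsingleton]
    simp
  | succ k ih =>
    intro j hj N _ _ hN
    induction hN using IsNoetherianRing.induction_on_isQuotientEquivQuotientPrime A with
    | subsingleton N =>
      have := EE_subsingleton (A := A) N j
      rw [supportDim_eq_bot_of_subsingleton]
      simp
    | quotient N p e =>
      rw [← supportDim_eq_of_equiv (EEequiv e j)]
      by_cases hp : p.1 = maximalIdeal A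
      · rw [hp]
        by_cases hjr : r < j
        · have := h1 (A ⧸ maximalIdeal A) j hjr
          rw [supportDim_eq_bot_of_subsingleton]
          simp
        have hz : supportDim A (EE A (A ⧸ maximalIdeal A) j) ≤ 0 := by
          have hann : maximalIdeal A ≤ Module.annihilator A (EE A (A ⧸ maximalIdeal A) j) := by
            intro x hx
            rw [Module.mem_annihilator]
            intro z
            have h0 : x • 𝟙 (ModuleCat.of A (A ⧸ maximalIdeal A)) = 0 := by
              rw [← Ideal.annihilator_quotient (I := maximalIdeal A), Module.mem_annihilator] at hx
              refine ModuleCat.hom_ext (LinearMap.ext fun m => ?_)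
              exact hx m
            rw [← mk₀_smul_comp, h0, Abelian.Ext.mk₀_zero, Abelian.Ext.zero_comp]
          have hss : Subsingleton (support A (EE A (A ⧸ maximalIdeal A) j)) := by
            refine ⟨fun p q => Subtype.ext (PrimeSpectrum.ext ?_)⟩
            have key (p : support A (EE A (A ⧸ maximalIdeal A) j)) :
                p.1.asIdeal = maximalIdeal A :=
              le_antisymm (le_maximalIdeal p.1.2.ne_top)
                (hann.trans (mem_support_iff_of_finite.mp p.2))
            rw [key p, key q]
          exact Order.krullDim_nonpos_of_subsingleton
        calc _ ≤ (0 : WithBot ℕ∞) + ((j : ℕ∞) : WithBot ℕ∞) := by gcongr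
          _ ≤ _ := by
            rw [zero_add]
            exact_mod_cast not_lt.mp hjr
      · obtain ⟨x, hx, reg⟩ := exists_reg p hp
        refine le_trans ?_ (ih (j+1) (by omega) (QuotSMulTop x (A ⧸ p.1)))
        have := EE_step _ hx reg j
        calc _ ≤ (supportDim A (EE A (QuotSMulTop x (A ⧸ p.1)) (j+1)) + 1) + ((j : ℕ∞) : WithBot ℕ∞) := by
              gcongr
          _ = _ := by push_cast; rw [add_assoc, add_comm (1 : WithBot ℕ∞)]
    | exact N₁ N₂ N₃ f g hf hg hfg i1 i3 =>
      have := supportDim_le_of_exact (EE_exact_mid hf hg hfg j)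
      rcases le_max_iff.mp this with h | h
      · refine le_trans ?_ i3; gcongr
      · refine le_trans ?_ i1; gcongr

end
theorem stmt11 (A : Type u) [CommRing A] [IsNoetherianRing A] [IsLocalRing A]
    (hGor : HasFiniteSelfInjDim A) (d : ℕ) (hd : ringKrullDim A = d)
    (N : Type u) [AddCommGroup N] [Module A N] [Module.Finite A N] (j : ℕ)
    (hExt : Nontrivial (extPow A N j)) :
    HAdd.hAdd (α := WithBot ℕ∞) (β := WithBot ℕ∞) (γ := WithBot ℕ∞)
        (ringKrullDim (A ⧸ Module.annihilator A ↥(extPow A N j))) ((j : ℕ∞) : WithBot ℕ∞) ≤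
      ((d : ℕ∞) : WithBot ℕ∞) := by
  obtain ⟨n, hn⟩ := hGor
  have hb := exists_bound (A := A) d hd n (fun N _ _ _ i hi =>
    (ext_cmp A (ModuleCat.of A N) (ModuleCat.of A A) i).some.symm.toEquiv.subsingleton_congr.mpr
      (hn (ModuleCat.of A N) i hi))
  have h := EE_bound d hb (d+1) j (by omega) N
  have e : extPow A N j ≃ₗ[A] EE A N j :=
    (ext_cmp A (ModuleCat.of A N) (ModuleCat.of A A) j).some
  rw [e.annihilator_eq, ← Module.supportDim_eq_ringKrullDim_quotient_annihilator]
  exact h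

end
end
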